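/- For all integers N ≥ 0 and h ≥ 1, the odd q-super Catalan numbers satisfy the recurrence C_{N,N+h}(q) = Σ_{k=0}^{⌊(h-1)/2⌋} C_{N,k}(q) · Σ_{j=k}^{h-k-1} q^{k(N+k+1) + j(N+j+1)} · [h-1 choose 2k] · [h-2k-1 choose j-k]. -/

import Mathlib

open Finset

noncomputable section

/-- The variable `q`, as a rational function over `ℚ`. -/
def q : RatFunc ℚ := RatFunc.X

/-- The `q`-integer `[n] = (1 - q^n)/(1 - q)`. -/
def qint (n : ℕ) : RatFunc ℚ := (1 - q ^ n) / (1 - q)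

/-- The `q`-factorial `[n]! = [1][2]⋯[n]`, with `[0]! = 1`. -/
def qfact (n : ℕ) : RatFunc ℚ := ∏ i ∈ Finset.range n, qint (i + 1)

/-- The Gaussian (q-binomial) coefficient `[N choose K]`, equal to
`[N]!/([K]![N-K]!)` if `0 ≤ K ≤ N`, and `0` otherwise. -/
def qbinom (N K : ℤ) : RatFunc ℚ :=
  if 0 ≤ K ∧ K ≤ N then qfact N.toNat / (qfact K.toNat * qfact (N - K).toNat) else 0

/-- The odd `q`-super Catalan number
`C_{m,n}(q) = [2m+1]! [2n]! / ([m+n+1]! [m]! [n]!)`. -/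
def C (m n : ℕ) : RatFunc ℚ :=
  qfact (2 * m + 1) * qfact (2 * n) / (qfact (m + n + 1) * qfact m * qfact n)

theorem one_sub_q_pow_ne_zero (n : ℕ) : (1 : RatFunc ℚ) - q ^ (n + 1) ≠ 0 := by
  intro h
  have hX : (algebraMap (Polynomial ℚ) (RatFunc ℚ)) (Polynomial.X ^ (n + 1)) =
      algebraMap (Polynomial ℚ) (RatFunc ℚ) 1 := by
    rw [map_pow, RatFunc.algebraMap_X, map_one]
    exact (sub_eq_zero.mp h).symm
  have hdeg := congrArg Polynomial.natDegree (RatFunc.algebraMap_injective ℚ hX)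
  simp at hdeg

theorem one_sub_q_ne_zero : (1 : RatFunc ℚ) - q ≠ 0 := by
  simpa using one_sub_q_pow_ne_zero 0

theorem qint_succ_ne_zero (n : ℕ) : qint (n + 1) ≠ 0 :=
  div_ne_zero (one_sub_q_pow_ne_zero n) one_sub_q_ne_zero

theorem qint_add (l k : ℕ) : qint (l + k) = qint l + q ^ l * qint k := by
  unfold qint
  field_simp [one_sub_q_ne_zero]
  ring

theorem qfact_zero : qfact 0 = 1 := by
  simp [qfact]

theorem qfact_succ (n : ℕ) : qfact (n + 1) = qfact n * qint (n + 1) :=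
  Finset.prod_range_succ _ _

theorem qfact_ne_zero (n : ℕ) : qfact n ≠ 0 :=
  Finset.prod_ne_zero_iff.mpr fun i _ => qint_succ_ne_zero i

/-- The Gaussian coefficient on natural numbers, defined by the `q`-Pascal rule. -/
def qchoose : ℕ → ℕ → RatFunc ℚ
  | _, 0 => 1
  | 0, _ + 1 => 0
  | n + 1, k + 1 => qchoose n (k + 1) + q ^ (n - k) * qchoose n k

theorem qchoose_zero_right (n : ℕ) : qchoose n 0 = 1 := by
  cases n <;> rfl

theorem qchoose_succ_succ (n k : ℕ) :
    qchoose (n + 1) (k + 1) = qchoose n (k + 1) + q ^ (n - k) * qchoose n k := rfl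

theorem qchoose_eq_zero_of_lt {n k : ℕ} (h : n < k) : qchoose n k = 0 := by
  induction n generalizing k with
  | zero => obtain ⟨k, rfl⟩ := Nat.exists_eq_succ_of_ne_zero h.ne'; rfl
  | succ n ih =>
    obtain ⟨k, rfl⟩ := Nat.exists_eq_succ_of_ne_zero (Nat.ne_zero_of_lt h)
    rw [Nat.succ_eq_add_one, qchoose_succ_succ, ih (by omega), ih (by omega)]
    simp

theorem qchoose_mul_qfact_mul_qfact (k l : ℕ) :
    qchoose (k + l) k * qfact k * qfact l = qfact (k + l) := by
  induction k generalizing l with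
  | zero => simp [qchoose_zero_right, qfact_zero]
  | succ k ihk =>
    induction l with
    | zero =>
      have h := ihk 0
      rw [add_zero] at h
      rw [add_zero, qchoose_succ_succ, qchoose_eq_zero_of_lt (Nat.lt_succ_self k), qfact_succ]
      simp only [Nat.sub_self, pow_zero]
      linear_combination qint (k + 1) * h
    | succ l ihl =>
      have h := ihk (l + 1)
      have hsub : k + 1 + l - k = l + 1 := by omega
      rw [show k + (l + 1) = k + 1 + l by ring] at h
      rw [show k + 1 + (l + 1) = k + 1 + l + 1 by ring, qchoose_succ_succ, hsub,
        qfact_succ (k + 1 + l), show k + 1 + l + 1 = (l + 1) + (k + 1) by ring, qint_add,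
        qfact_succ k]
      rw [qfact_succ k] at ihl
      rw [qfact_succ l] at h ⊢
      linear_combination qint (l + 1) * ihl + q ^ (l + 1) * qint (k + 1) * h

theorem qchoose_add_eq_div (k l : ℕ) :
    qchoose (k + l) k = qfact (k + l) / (qfact k * qfact l) := by
  rw [eq_div_iff (mul_ne_zero (qfact_ne_zero k) (qfact_ne_zero l)), ← mul_assoc,
    qchoose_mul_qfact_mul_qfact]

/-- The `q`-Vandermonde convolution. -/
theorem sum_qchoose_mul_qchoose (n a j : ℕ) :
    ∑ k ∈ range (j + 1), q ^ (k * (a + k)) * qchoose (a + j) (j - k) * qchoose n k =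
      qchoose (a + j + n) j := by
  induction n generalizing a j with
  | zero =>
    rw [sum_range_succ', sum_eq_zero fun k _ => by
      rw [qchoose_eq_zero_of_lt (Nat.succ_pos k), mul_zero]]
    simp [qchoose_zero_right]
  | succ n ih =>
    cases j with
    | zero => simp [qchoose_zero_right]
    | succ j =>
      have h₁ := ih a (j + 1)
      have h₂ := ih (a + 1) j
      rw [sum_range_succ'] at h₁ ⊢
      have hsplit : ∀ k ∈ range (j + 1),
          q ^ ((k + 1) * (a + (k + 1))) * qchoose (a + (j + 1)) (j + 1 - (k + 1)) *
              qchoose (n + 1) (k + 1) =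
            q ^ ((k + 1) * (a + (k + 1))) * qchoose (a + (j + 1)) (j + 1 - (k + 1)) *
              qchoose n (k + 1) +
            q ^ (n + a + 1) * (q ^ (k * (a + 1 + k)) * qchoose (a + 1 + j) (j - k) *
              qchoose n k) := by
        intro k _
        rw [qchoose_succ_succ, Nat.add_sub_add_right, show a + (j + 1) = a + 1 + j by ring]
        rcases lt_or_ge n k with hk | hk
        · rw [qchoose_eq_zero_of_lt hk]
          ring
        · obtain ⟨d, rfl⟩ := Nat.exists_eq_add_of_le hk
          rw [Nat.add_sub_cancel_left]
          ring
      rw [sum_congr rfl hsplit, sum_add_distrib, ← mul_sum, h₂,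
        show a + (j + 1) + (n + 1) = (a + 1 + j + n) + 1 by ring, qchoose_succ_succ,
        show a + 1 + j + n - j = n + a + 1 by omega,
        show a + 1 + j + n = a + (j + 1) + n by ring, ← h₁]
      simp only [qchoose_zero_right]
      ring

theorem qbinom_add_left (k l : ℕ) :
    qbinom ((k + l : ℕ) : ℤ) k = qfact (k + l) / (qfact k * qfact l) := by
  have hle : (0 : ℤ) ≤ k ∧ (k : ℤ) ≤ ((k + l : ℕ) : ℤ) := by omega
  have hl : (((k + l : ℕ) : ℤ) - k).toNat = l := by omega
  rw [qbinom, if_pos hle, hl, Int.toNat_natCast, Int.toNat_natCast]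

/-- Each summand of the recurrence, with `j = k + i` and `h = 2 * k + i + l + 1`, is a common
factor times a product of terms of two nested `q`-Vandermonde convolutions. -/
theorem C_mul_qbinom_mul_qbinom (N k i l : ℕ) :
    C N k * (q ^ (k * (N + k + 1) + (k + i) * (N + (k + i) + 1)) *
        qbinom ((2 * k + (i + l) : ℕ) : ℤ) ((2 * k : ℕ) : ℤ) *
        qbinom ((i + l : ℕ) : ℤ) i) =
      qfact (2 * N + 1) * qfact (2 * k + (i + l)) /
          (qfact N * qfact (N + 1 + (2 * k + (i + l)))) *
        (q ^ ((k + i) * (N + 1 + (k + i))) *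
          qchoose (N + 1 + (2 * k + (i + l))) (k + l) *
          (q ^ (k * (N + 1 + k)) * qchoose (N + 1 + (k + i)) i * qchoose (k + l) k)) := by
  rw [qbinom_add_left, qbinom_add_left, qchoose_add_eq_div k l,
    show N + 1 + (k + i) = i + (N + k + 1) by ring, qchoose_add_eq_div i,
    show N + 1 + (2 * k + (i + l)) = (k + l) + (i + (N + k + 1)) by ring,
    qchoose_add_eq_div (k + l), C]
  have h₁ := qfact_ne_zero (2 * k)
  have h₂ := qfact_ne_zero (i + l)
  have h₃ := qfact_ne_zero (k + l)
  have h₄ := qfact_ne_zero (i + (N + k + 1))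
  have h₅ := qfact_ne_zero (k + l + (i + (N + k + 1)))
  field_simp
  ring

theorem C_add_eq (N M : ℕ) :
    C N (N + (M + 1)) = qfact (2 * N + 1) * qfact M / (qfact N * qfact (N + 1 + M)) *
      qchoose (N + 1 + M + (N + 1 + M)) M := by
  rw [show N + 1 + M + (N + 1 + M) = M + (N + (N + (M + 1)) + 1) by ring, qchoose_add_eq_div, C,
    show 2 * (N + (M + 1)) = M + (N + (N + (M + 1)) + 1) by ring,
    show N + (M + 1) = N + 1 + M by ring]
  have := qfact_ne_zero M
  field_simp

/-- For all integers `N ≥ 0` and `h ≥ 1`,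
`C_{N,N+h}(q) = Σ_{k=0}^{⌊(h-1)/2⌋} C_{N,k}(q)
  Σ_{j=k}^{h-k-1} q^{k(N+k+1)+j(N+j+1)} [h-1 choose 2k] [h-2k-1 choose j-k]`. -/
theorem backward_recurrence (N h : ℕ) (hh : 1 ≤ h) :
    C N (N + h) =
      ∑ k ∈ Finset.range ((h - 1) / 2 + 1),
        C N k *
          ∑ j ∈ Finset.Icc k (h - k - 1),
            q ^ (k * (N + k + 1) + j * (N + j + 1)) *
              qbinom ((h : ℤ) - 1) (2 * (k : ℤ)) *
              qbinom ((h : ℤ) - 2 * k - 1) ((j : ℤ) - k) := by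
  obtain ⟨M, rfl⟩ := Nat.exists_eq_add_of_le' hh
  simp only [mul_sum]
  have hcomm : ∀ k j, k ∈ range ((M + 1 - 1) / 2 + 1) ∧ j ∈ Icc k (M + 1 - k - 1) ↔
      k ∈ range (min j (M - j) + 1) ∧ j ∈ range (M + 1) := by
    intro k j
    simp only [mem_range, mem_Icc]
    omega
  rw [sum_comm' hcomm, C_add_eq, ← sum_qchoose_mul_qchoose (N + 1 + M) (N + 1) M, mul_sum]
  refine sum_congr rfl fun j hj => ?_
  have hjM : j ≤ M := by simpa [Nat.lt_succ_iff] using hj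
  have hinner := sum_qchoose_mul_qchoose (M - j) (N + 1) j
  rw [show N + 1 + j + (M - j) = N + 1 + M by omega] at hinner
  rw [← hinner, ← sum_subset (range_mono (show min j (M - j) + 1 ≤ j + 1 by omega)), mul_sum,
    mul_sum]
  · refine sum_congr rfl fun k hk => ?_
    rw [mem_range] at hk
    obtain ⟨i, rfl⟩ := Nat.exists_eq_add_of_le (show k ≤ j by omega)
    obtain ⟨l, rfl⟩ := Nat.exists_eq_add_of_le (show 2 * k + i ≤ M by omega)
    have hterm := C_mul_qbinom_mul_qbinom N k i l
    have e₁ : ((2 * k + i + l + 1 : ℕ) : ℤ) - 1 = ((2 * k + (i + l) : ℕ) : ℤ) := by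
      push_cast; ring
    have e₂ : ((2 * k + i + l + 1 : ℕ) : ℤ) - 2 * k - 1 = ((i + l : ℕ) : ℤ) := by
      push_cast; ring
    have e₃ : ((k + i : ℕ) : ℤ) - k = i := by push_cast; ring
    have e₄ : (2 * (k : ℤ)) = ((2 * k : ℕ) : ℤ) := by push_cast; ring
    rw [e₁, e₂, e₃, e₄, hterm, show 2 * k + i + l - (k + i) = k + l by omega,
      Nat.add_sub_cancel_left, ← add_assoc (2 * k) i l]
  · intro k hk hk'
    rw [mem_range] at hk hk'
    rw [qchoose_eq_zero_of_lt (show M - j < k by omega), mul_zero]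

end
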